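/- Let M ∈ ℝ^{m×n} be entrywise nonnegative such that the vertices of conv(θ(M)) are non-repeated. Then for any 0 ≤ α ≤ β ≤ 1, conv(θ(M)) ⊆ conv(θ(P^α(M))) ⊆ conv(θ(P^β(M))) ⊆ Δ^m ∩ col(θ(M)), where col(θ(M)) is the linear span of the columns of θ(M); consequently rank₊(M) ≤ rank₊(P^α(M)) ≤ rank₊(P^β(M)). -/

import Mathlib

open Matrix BigOperators

/-- The column `j` of `M` normalized to unit ℓ₁-norm. -/
noncomputable def normCol {m n : ℕ} (M : Matrix (Fin m) (Fin n) ℝ) (j : Fin n) : Fin m → ℝ :=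
  (∑ i, |M i j|)⁻¹ • fun i => M i j

/-- Column `j` of `M` is nonzero. -/
def colNZ {m n : ℕ} (M : Matrix (Fin m) (Fin n) ℝ) (j : Fin n) : Prop :=
  (fun i => M i j) ≠ 0

/-- `θ(M)`: the set of ℓ₁-normalized nonzero columns of `M`. -/
noncomputable def thetaCols {m n : ℕ} (M : Matrix (Fin m) (Fin n) ℝ) : Set (Fin m → ℝ) :=
  {x | ∃ j, colNZ M j ∧ x = normCol M j}

/-- The nonnegative rank of `M`. -/
noncomputable def nnRank {m n : ℕ} (M : Matrix (Fin m) (Fin n) ℝ) : ℕ :=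
  sInf {r : ℕ | ∃ U : Matrix (Fin m) (Fin r) ℝ, ∃ V : Matrix (Fin r) (Fin n) ℝ,
    (∀ i j, 0 ≤ U i j) ∧ (∀ i j, 0 ≤ V i j) ∧ M = U * V}

/-- The squared Frobenius norm. -/
noncomputable def frobSq {m n : ℕ} (A : Matrix (Fin m) (Fin n) ℝ) : ℝ :=
  ∑ i, ∑ j, (A i j) ^ 2

/-- Feasibility for problem (tigrel): `B ≥ 0`, zero diagonal, `MB ≤ M` entrywise. -/
def TigrelFeasible {m n : ℕ} (M : Matrix (Fin m) (Fin n) ℝ)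
    (B : Matrix (Fin n) (Fin n) ℝ) : Prop :=
  (∀ i j, 0 ≤ B i j) ∧ (∀ i, B i i = 0) ∧ ∀ i j, (M * B) i j ≤ M i j

/-- Optimality for problem (tigrel): feasible and minimizes `‖M - MB‖_F²`. -/
def TigrelOpt {m n : ℕ} (M : Matrix (Fin m) (Fin n) ℝ)
    (B : Matrix (Fin n) (Fin n) ℝ) : Prop :=
  TigrelFeasible M B ∧
    ∀ B', TigrelFeasible M B' → frobSq (M - M * B) ≤ frobSq (M - M * B')

/-- A monomial matrix: permutation of a diagonal matrix with positive diagonal. -/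
def IsMonomial {k : ℕ} (P : Matrix (Fin k) (Fin k) ℝ) : Prop :=
  ∃ (σ : Equiv.Perm (Fin k)) (d : Fin k → ℝ), (∀ i, 0 < d i) ∧
    ∀ i j, P i j = if i = σ j then d j else 0

/-- Every extreme point of `conv(θ(M))` equals `θ(M_{:j})` for exactly one column `j`. -/
def NonRepeatedVertices {m n : ℕ} (M : Matrix (Fin m) (Fin n) ℝ) : Prop :=
  ∀ x ∈ Set.extremePoints ℝ (convexHull ℝ (thetaCols M)),
    ∃! j : Fin n, colNZ M j ∧ x = normCol M j

/-- Uniqueness of size-`r` exact NMF up to permutation and scaling. -/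
def UniqueNMF {m n : ℕ} (r : ℕ) (M : Matrix (Fin m) (Fin n) ℝ) : Prop :=
  ∀ (U₁ U₂ : Matrix (Fin m) (Fin r) ℝ) (V₁ V₂ : Matrix (Fin r) (Fin n) ℝ),
    (∀ i j, 0 ≤ U₁ i j) → (∀ i j, 0 ≤ V₁ i j) →
    (∀ i j, 0 ≤ U₂ i j) → (∀ i j, 0 ≤ V₂ i j) →
    M = U₁ * V₁ → M = U₂ * V₂ →
    ∃ P : Matrix (Fin r) (Fin r) ℝ, IsMonomial P ∧ U₂ = U₁ * P ∧ V₂ = P⁻¹ * V₁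

/-- Separability of a factorization, expressed as a property of the right factor `V`. -/
def SeparableFactor {r n : ℕ} (V : Matrix (Fin r) (Fin n) ℝ) : Prop :=
  ∀ i : Fin r, ∃ j : Fin n, V i j ≠ 0 ∧ ∀ i' : Fin r, i' ≠ i → V i' j = 0

/-- The Frobenius norm. -/
noncomputable def frobNorm {m n : ℕ} (A : Matrix (Fin m) (Fin n) ℝ) : ℝ :=
  Real.sqrt (∑ i, ∑ j, (A i j) ^ 2)

/-- The Euclidean (ℓ₂) norm of a vector. -/
noncomputable def vecNorm2 {n : ℕ} (x : Fin n → ℝ) : ℝ :=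
  Real.sqrt (∑ i, (x i) ^ 2)

/-- The spectral (operator 2-) norm of a matrix. -/
noncomputable def specNorm {m n : ℕ} (A : Matrix (Fin m) (Fin n) ℝ) : ℝ :=
  sSup {c : ℝ | ∃ x : Fin n → ℝ, vecNorm2 x ≤ 1 ∧ c = vecNorm2 (A.mulVec x)}

/-!
For `X ≥ 0` the hull of the normalized columns is the intersection of the unit simplex with the
cone `cone X` generated by the columns of `X`, and `cone X ⊆ cone Y` means that `X = Y W` with
`W ≥ 0`; so every claim on hulls and on nonnegative ranks reduces to an inclusion of cones.

The inclusion that matters is `cone M ⊆ cone (M(I - αB))`. If it failed, some linear functional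
would be nonnegative on the columns of `M(I - αB)` but negative somewhere on `conv(θ(M))`, hence
minimal, with value `μ < 0`, at a vertex `θ(M_{:i})`. Since no other column repeats this vertex, and
`B_{ii} = 0`, column `i` of `M` is not a nonnegative combination `(MB)_{:i}` of the others, so
`(MB)_{:i} ≤ M_{:i}` has strictly smaller coordinate sum. The functional takes the value
`μ ‖M_{:i}‖₁` at `M_{:i}` and at least `μ ‖(MB)_{:i}‖₁` at `(MB)_{:i}`, which makes it negative at
column `i` of `M(I - αB)`, a contradiction. Monotonicity in `α` follows because `M(I - αB)` is a
convex combination of `M` and `M(I - βB)`.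
-/

section Simplex

variable {𝕜 ι : Type*} [Field 𝕜] [LinearOrder 𝕜] [IsStrictOrderedRing 𝕜] [Fintype ι]
  {s : Set (ι → 𝕜)}

theorem convexHull_eq_hull_inter_stdSimplex (hs : s ⊆ stdSimplex 𝕜 ι) :
    convexHull 𝕜 s = (PointedCone.hull 𝕜 s : Set (ι → 𝕜)) ∩ stdSimplex 𝕜 ι := by
  refine subset_antisymm (Set.subset_inter
    (convexHull_min PointedCone.subset_hull (PointedCone.convex _))
    (convexHull_min hs (convex_stdSimplex 𝕜 ι))) ?_
  rintro x ⟨hx, -, hx_sum⟩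
  obtain ⟨c, hcs, hc, rfl⟩ := PointedCone.mem_hull_set.1 hx
  have hc_sum : ∑ y ∈ c.support, c y = 1 := by
    rw [← hx_sum]
    simp only [Finsupp.sum, Finset.sum_apply, Pi.smul_apply, smul_eq_mul]
    rw [Finset.sum_comm]
    refine Finset.sum_congr rfl fun y hy => ?_
    rw [← Finset.mul_sum, (hs (hcs hy)).2, mul_one]
  exact (convex_convexHull 𝕜 s).sum_mem (fun y _ => hc y) hc_sum
    fun y hy => subset_convexHull 𝕜 s (hcs hy)

theorem notMem_hull_sdiff_singleton_of_mem_extremePoints (hs : s ⊆ stdSimplex 𝕜 ι) {e : ι → 𝕜}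
    (he : e ∈ (convexHull 𝕜 s).extremePoints 𝕜) : e ∉ PointedCone.hull 𝕜 (s \ {e}) := by
  intro he_hull
  have he_rest : e ∈ convexHull 𝕜 (s \ {e}) := by
    rw [convexHull_eq_hull_inter_stdSimplex (Set.sdiff_subset.trans hs)]
    exact ⟨he_hull, hs (extremePoints_convexHull_subset he)⟩
  exact ((convex_convexHull 𝕜 s).mem_extremePoints_iff_mem_sdiff_convexHull_sdiff.1 he).2
    (convexHull_mono (Set.sdiff_subset_sdiff_left (subset_convexHull 𝕜 s)) he_rest)

end Simplex

theorem exists_mem_extremePoints_isMinOn {E : Type*} [AddCommGroup E] [Module ℝ E]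
    [TopologicalSpace E] [T2Space E] [IsTopologicalAddGroup E] [ContinuousSMul ℝ E]
    [LocallyConvexSpace ℝ E] {s : Set E} (hs : IsCompact s) (hne : s.Nonempty) (g : E →L[ℝ] ℝ) :
    ∃ e ∈ s.extremePoints ℝ, IsMinOn g s e := by
  obtain ⟨x₀, hx₀, hmin⟩ := hs.exists_isMinOn hne g.continuous.continuousOn
  have hface : IsExposed ℝ s ((-g).toExposed s) := ContinuousLinearMap.toExposed.isExposed
  have hface_ne : ((-g).toExposed s).Nonempty := ⟨x₀, hx₀, fun y hy => neg_le_neg (hmin hy)⟩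
  obtain ⟨e, he⟩ := (hface.isCompact hs).extremePoints_nonempty hface_ne
  exact ⟨e, hface.isExtreme.extremePoints_subset_extremePoints he,
    fun y hy => neg_le_neg_iff.1 (he.1.2 y hy)⟩

theorem exists_nonneg_on_and_neg_of_notMem_hull {ι : Type*} [Fintype ι] {s : Set (ι → ℝ)}
    (hfin : s.Finite) (hs : s ⊆ stdSimplex ℝ ι)
    {x : ι → ℝ} (hx : x ∈ stdSimplex ℝ ι) (hxs : x ∉ PointedCone.hull ℝ s) :
    ∃ g : (ι → ℝ) →L[ℝ] ℝ, (∀ y ∈ s, 0 ≤ g y) ∧ g x < 0 := by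
  have hx_hull : x ∉ convexHull ℝ s := fun h =>
    hxs ((convexHull_eq_hull_inter_stdSimplex hs).subset h).1
  obtain ⟨f, u, hfx, hfs⟩ := geometric_hahn_banach_point_closed (convex_convexHull ℝ s)
    (hfin.isCompact_convexHull (𝕜 := ℝ)).isClosed hx_hull
  -- The coordinate sum is `1` on the simplex, so subtracting `u` times it shifts `f` by `-u` there.
  let g : (ι → ℝ) →L[ℝ] ℝ := f - u • ∑ i, ContinuousLinearMap.proj i
  have hg : ∀ y ∈ stdSimplex ℝ ι, g y = f y - u := fun y hy => by simp [g, hy.2]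
  refine ⟨g, fun y hy => ?_, ?_⟩
  · rw [hg y (hs hy)]
    exact sub_nonneg.2 (hfs y (subset_convexHull ℝ s hy)).le
  · rw [hg x hx]
    exact sub_neg.2 hfx

section ColumnCone

variable {ι κ ρ : Type*}

/-- The convex cone generated by the columns of `X`. Inclusions between column cones are what both
the hulls of normalized columns and the nonnegative rank depend on. -/
def columnCone (X : Matrix ι κ ℝ) : PointedCone ℝ (ι → ℝ) :=
  PointedCone.hull ℝ (Set.range X.col)

theorem col_mem_columnCone (X : Matrix ι κ ℝ) (j : κ) : X.col j ∈ columnCone X :=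
  PointedCone.subset_hull ⟨j, rfl⟩

theorem columnCone_le_iff {X : Matrix ι κ ℝ} {C : PointedCone ℝ (ι → ℝ)} :
    columnCone X ≤ C ↔ ∀ j, X.col j ∈ C :=
  Submodule.span_le.trans Set.range_subset_iff

variable [Fintype κ]

theorem mulVec_eq_sum_smul_col {R : Type*} [CommSemiring R] (X : Matrix ι κ R) (w : κ → R) :
    X *ᵥ w = ∑ k, w k • X.col k := by
  ext i
  simp [mulVec, dotProduct, mul_comm]

theorem mulVec_mem_of_col_mem {X : Matrix ι κ ℝ} {w : κ → ℝ} {C : PointedCone ℝ (ι → ℝ)}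
    (hw : ∀ k, 0 ≤ w k) (hX : ∀ k, w k ≠ 0 → X.col k ∈ C) : X *ᵥ w ∈ C := by
  rw [mulVec_eq_sum_smul_col]
  refine Submodule.sum_mem _ fun k _ => ?_
  rcases eq_or_ne (w k) 0 with hk | hk
  · simp [hk]
  · exact C.smul_mem (hw k) (hX k hk)

theorem exists_mulVec_eq_of_mem_columnCone {X : Matrix ι κ ℝ} {x : ι → ℝ}
    (hx : x ∈ columnCone X) : ∃ w : κ → ℝ, (∀ k, 0 ≤ w k) ∧ X *ᵥ w = x := by
  obtain ⟨c, rfl⟩ := Submodule.mem_span_range_iff_exists_fun _ |>.1 hx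
  exact ⟨fun k => c k, fun k => (c k).2, mulVec_eq_sum_smul_col X _⟩

theorem columnCone_le_columnCone_iff {X : Matrix ι ρ ℝ} {Y : Matrix ι κ ℝ} :
    columnCone X ≤ columnCone Y ↔ ∃ W : Matrix κ ρ ℝ, (∀ i j, 0 ≤ W i j) ∧ X = Y * W := by
  refine columnCone_le_iff.trans ⟨fun h => ?_, ?_⟩
  · choose w hw hwX using fun j => exists_mulVec_eq_of_mem_columnCone (h j)
    exact ⟨(Matrix.of w)ᵀ, fun i j => hw j i, ext_col fun j => (hwX j).symm⟩
  · rintro ⟨W, hW, rfl⟩ j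
    exact mulVec_mem_of_col_mem (w := W.col j) (fun k => hW k j) fun k _ => col_mem_columnCone Y k

end ColumnCone

theorem nnRank_le_nnRank_of_columnCone_le {m n p : ℕ} {X : Matrix (Fin m) (Fin n) ℝ}
    {Y : Matrix (Fin m) (Fin p) ℝ} (hY : ∀ i j, 0 ≤ Y i j) (h : columnCone X ≤ columnCone Y) :
    nnRank X ≤ nnRank Y := by
  have hfactor : ∃ (U : Matrix (Fin m) (Fin (nnRank Y)) ℝ) (V : Matrix (Fin (nnRank Y)) (Fin p) ℝ),
      (∀ i j, 0 ≤ U i j) ∧ (∀ i j, 0 ≤ V i j) ∧ Y = U * V :=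
    Nat.sInf_mem (s := {r : ℕ | ∃ (U : Matrix (Fin m) (Fin r) ℝ) (V : Matrix (Fin r) (Fin p) ℝ),
      (∀ i j, 0 ≤ U i j) ∧ (∀ i j, 0 ≤ V i j) ∧ Y = U * V})
      ⟨p, Y, 1, hY, fun i j => by rw [one_apply]; split_ifs <;> norm_num, (Y.mul_one).symm⟩
  obtain ⟨U, V, hU, hV, hUV⟩ := hfactor
  have hXU : columnCone X ≤ columnCone U := h.trans (columnCone_le_columnCone_iff.2 ⟨V, hV, hUV⟩)
  obtain ⟨W, hW, hXW⟩ := columnCone_le_columnCone_iff.1 hXU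
  exact Nat.sInf_le ⟨U, W, hU, hW, hXW⟩

section NormalizedColumns

variable {m n p : ℕ} {X : Matrix (Fin m) (Fin n) ℝ} {Y : Matrix (Fin m) (Fin p) ℝ}

theorem sum_abs_pos_of_colNZ {j : Fin n} (hj : colNZ X j) : 0 < ∑ i, |X i j| := by
  obtain ⟨i, hi⟩ := Function.ne_iff.1 hj
  exact Finset.sum_pos' (fun _ _ => abs_nonneg _) ⟨i, Finset.mem_univ i, abs_pos.2 hi⟩

theorem col_eq_smul_normCol {j : Fin n} (hj : colNZ X j) :
    X.col j = (∑ i, |X i j|) • normCol X j :=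
  (smul_inv_smul₀ (sum_abs_pos_of_colNZ hj).ne' _).symm

theorem col_mem_of_normCol_mem {C : PointedCone ℝ (Fin m → ℝ)} {j : Fin n}
    (h : colNZ X j → normCol X j ∈ C) : X.col j ∈ C := by
  by_cases hj : colNZ X j
  · rw [col_eq_smul_normCol hj]
    exact C.smul_mem (sum_abs_pos_of_colNZ hj).le (h hj)
  · have hzero : X.col j = 0 := not_not.1 hj
    rw [hzero]
    exact C.zero_mem

theorem normCol_mem_of_col_mem {C : PointedCone ℝ (Fin m → ℝ)} {j : Fin n} (h : X.col j ∈ C) :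
    normCol X j ∈ C :=
  C.smul_mem (inv_nonneg.2 (Finset.sum_nonneg fun _ _ => abs_nonneg _)) h

theorem hull_thetaCols (X : Matrix (Fin m) (Fin n) ℝ) :
    PointedCone.hull ℝ (thetaCols X) = columnCone X := by
  refine le_antisymm (Submodule.span_le.2 ?_) (columnCone_le_iff.2 fun j => ?_)
  · rintro _ ⟨j, -, rfl⟩
    exact normCol_mem_of_col_mem (col_mem_columnCone X j)
  · exact col_mem_of_normCol_mem fun hj => PointedCone.subset_hull ⟨j, hj, rfl⟩

theorem finite_thetaCols (X : Matrix (Fin m) (Fin n) ℝ) : (thetaCols X).Finite :=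
  (Set.finite_range (normCol X)).subset fun _ ⟨j, _, hj⟩ => ⟨j, hj.symm⟩

theorem thetaCols_subset_stdSimplex (hX : ∀ i j, 0 ≤ X i j) :
    thetaCols X ⊆ stdSimplex ℝ (Fin m) := by
  rintro _ ⟨j, hj, rfl⟩
  have hpos := sum_abs_pos_of_colNZ hj
  refine ⟨fun i => mul_nonneg (inv_nonneg.2 hpos.le) (hX i j), ?_⟩
  simp only [normCol, abs_of_nonneg (hX _ j)] at hpos ⊢
  simp only [Pi.smul_apply, smul_eq_mul, ← Finset.mul_sum, inv_mul_cancel₀ hpos.ne']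

theorem mul_sum_le_map_of_mem_columnCone (hX : ∀ i j, 0 ≤ X i j) {g : (Fin m → ℝ) →ₗ[ℝ] ℝ} {μ : ℝ}
    (hμ : ∀ y ∈ thetaCols X, μ ≤ g y) {x : Fin m → ℝ} (hx : x ∈ columnCone X) :
    μ * ∑ i, x i ≤ g x := by
  let h : (Fin m → ℝ) →ₗ[ℝ] ℝ := g - μ • ∑ i, LinearMap.proj i
  have h_apply : ∀ y, h y = g y - μ * ∑ i, y i := fun y => by simp [h]
  have hcone : columnCone X ≤ (PointedCone.positive ℝ ℝ).comap h := by
    rw [← hull_thetaCols]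
    refine Submodule.span_le.2 fun y hy => ?_
    change 0 ≤ h y
    rw [h_apply, (thetaCols_subset_stdSimplex hX hy).2, mul_one]
    exact sub_nonneg.2 (hμ y hy)
  have hx_nonneg : 0 ≤ h x := hcone hx
  rw [h_apply] at hx_nonneg
  exact sub_nonneg.1 hx_nonneg

theorem convexHull_thetaCols (hX : ∀ i j, 0 ≤ X i j) :
    convexHull ℝ (thetaCols X) = (columnCone X : Set (Fin m → ℝ)) ∩ stdSimplex ℝ (Fin m) := by
  rw [convexHull_eq_hull_inter_stdSimplex (thetaCols_subset_stdSimplex hX), hull_thetaCols]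

theorem convexHull_thetaCols_mono (hX : ∀ i j, 0 ≤ X i j) (hY : ∀ i j, 0 ≤ Y i j)
    (h : columnCone X ≤ columnCone Y) :
    convexHull ℝ (thetaCols X) ⊆ convexHull ℝ (thetaCols Y) := by
  rw [convexHull_thetaCols hX, convexHull_thetaCols hY]
  exact Set.inter_subset_inter_left _ h

theorem span_thetaCols (X : Matrix (Fin m) (Fin n) ℝ) :
    Submodule.span ℝ (thetaCols X) = LinearMap.range X.mulVecLin := by
  rw [range_mulVecLin, ← Submodule.span_span_of_tower {c : ℝ // 0 ≤ c} ℝ (thetaCols X),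
    ← Submodule.span_span_of_tower {c : ℝ // 0 ≤ c} ℝ (Set.range X.col)]
  exact congrArg (fun C : PointedCone ℝ (Fin m → ℝ) => Submodule.span ℝ (C : Set (Fin m → ℝ)))
    (hull_thetaCols X)

theorem span_thetaCols_mul_le (X : Matrix (Fin m) (Fin n) ℝ) (A : Matrix (Fin n) (Fin p) ℝ) :
    Submodule.span ℝ (thetaCols (X * A)) ≤ Submodule.span ℝ (thetaCols X) := by
  rw [span_thetaCols, span_thetaCols, mulVecLin_mul]
  exact LinearMap.range_comp_le_range _ _

end NormalizedColumns

section Tigrel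

variable {m n : ℕ} {M : Matrix (Fin m) (Fin n) ℝ} {B : Matrix (Fin n) (Fin n) ℝ}

theorem mul_one_sub_smul {R ι κ : Type*} [CommRing R] [Fintype κ] [DecidableEq κ]
    (M : Matrix ι κ R) (B : Matrix κ κ R) (α : R) :
    M * (1 - α • B) = M - α • (M * B) := by
  rw [Matrix.mul_sub, Matrix.mul_one, Matrix.mul_smul]

theorem mul_apply_nonneg {ι κ ρ : Type*} [Fintype κ] {A : Matrix ι κ ℝ} {B : Matrix κ ρ ℝ}
    (hA : ∀ i j, 0 ≤ A i j) (hB : ∀ i j, 0 ≤ B i j) (i : ι) (j : ρ) : 0 ≤ (A * B) i j := by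
  rw [mul_apply]
  exact Finset.sum_nonneg fun k _ => mul_nonneg (hA i k) (hB k j)

theorem mul_one_sub_smul_nonneg (hM : ∀ i j, 0 ≤ M i j) (hB : TigrelFeasible M B) {α : ℝ}
    (hα : α ≤ 1) : ∀ i j, 0 ≤ (M * (1 - α • B) : Matrix (Fin m) (Fin n) ℝ) i j := by
  intro i j
  rw [mul_one_sub_smul]
  exact sub_nonneg.2 ((mul_le_of_le_one_left (mul_apply_nonneg hM hB.1 i j) hα).trans
    (hB.2.2 i j))

theorem col_mul_ne_col_of_mem_extremePoints (hM : ∀ i j, 0 ≤ M i j) {i : Fin n}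
    (hext : normCol M i ∈ (convexHull ℝ (thetaCols M)).extremePoints ℝ)
    (huniq : ∀ k, colNZ M k → normCol M k = normCol M i → k = i)
    (hB : ∀ k, 0 ≤ B k i) (hBi : B i i = 0) : (M * B).col i ≠ M.col i := by
  intro heq
  refine notMem_hull_sdiff_singleton_of_mem_extremePoints (thetaCols_subset_stdSimplex hM) hext ?_
  have hothers : ∀ k, B k i ≠ 0 →
      M.col k ∈ PointedCone.hull ℝ (thetaCols M \ {normCol M i}) := by
    intro k hk
    refine col_mem_of_normCol_mem fun hMk => PointedCone.subset_hull ⟨⟨k, hMk, rfl⟩, ?_⟩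
    exact fun hki => hk (huniq k hMk hki ▸ hBi)
  have hcol : M.col i ∈ PointedCone.hull ℝ (thetaCols M \ {normCol M i}) :=
    heq ▸ mulVec_mem_of_col_mem (w := B.col i) hB hothers
  exact normCol_mem_of_col_mem hcol

theorem map_col_mul_one_sub_smul_neg (hM : ∀ i j, 0 ≤ M i j) (hB : TigrelFeasible M B) {α : ℝ}
    (h0 : 0 ≤ α) (h1 : α ≤ 1) {i : Fin n} (hi : colNZ M i) (hne : (M * B).col i ≠ M.col i)
    {g : (Fin m → ℝ) →ₗ[ℝ] ℝ} (hmin : ∀ y ∈ thetaCols M, g (normCol M i) ≤ g y)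
    (hneg : g (normCol M i) < 0) : g ((M * (1 - α • B)).col i) < 0 := by
  set μ := g (normCol M i)
  have hcol : g (M.col i) = μ * ∑ l, M l i := by
    rw [col_eq_smul_normCol hi, map_smul, smul_eq_mul, mul_comm]
    simp only [abs_of_nonneg (hM _ i), μ]
  have hMB : μ * ∑ l, (M * B) l i ≤ g ((M * B).col i) :=
    mul_sum_le_map_of_mem_columnCone hM hmin
      (columnCone_le_iff.1 (columnCone_le_columnCone_iff.2 ⟨B, hB.1, rfl⟩) i)
  have hsum_lt : ∑ l, (M * B) l i < ∑ l, M l i :=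
    Fintype.sum_strictMono (lt_of_le_of_ne (fun l => hB.2.2 l i) hne)
  have hsum_nonneg : 0 ≤ ∑ l, (M * B) l i :=
    Finset.sum_nonneg fun l _ => mul_apply_nonneg hM hB.1 l i
  have hα_sum : α * ∑ l, (M * B) l i < ∑ l, M l i :=
    (mul_le_of_le_one_left hsum_nonneg h1).trans_lt hsum_lt
  calc g ((M * (1 - α • B)).col i) = g (M.col i) - α * g ((M * B).col i) := by
        rw [mul_one_sub_smul, ← smul_eq_mul, ← map_smul, ← map_sub]
        rfl
    _ ≤ μ * ∑ l, M l i - α * (μ * ∑ l, (M * B) l i) := by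
        rw [hcol]
        gcongr
    _ = μ * (∑ l, M l i - α * ∑ l, (M * B) l i) := by ring
    _ < 0 := mul_neg_of_neg_of_pos hneg (sub_pos.2 hα_sum)

theorem columnCone_le_columnCone_mul_one_sub_smul (hM : ∀ i j, 0 ≤ M i j)
    (hvert : NonRepeatedVertices M) (hB : TigrelFeasible M B) {α : ℝ} (h0 : 0 ≤ α) (h1 : α ≤ 1) :
    columnCone M ≤ columnCone (M * (1 - α • B)) := by
  set P := M * (1 - α • B)
  have hP : ∀ i j, 0 ≤ P i j := mul_one_sub_smul_nonneg hM hB h1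
  rw [← hull_thetaCols M, ← hull_thetaCols P]
  refine Submodule.span_le.2 fun x hx => ?_
  by_contra hxP
  obtain ⟨g, hgP, hgx⟩ := exists_nonneg_on_and_neg_of_notMem_hull (finite_thetaCols P)
    (thetaCols_subset_stdSimplex hP) (thetaCols_subset_stdSimplex hM hx) hxP
  obtain ⟨e, he, hmin⟩ := exists_mem_extremePoints_isMinOn
    ((finite_thetaCols M).isCompact_convexHull (𝕜 := ℝ)) ⟨x, subset_convexHull ℝ _ hx⟩ g
  obtain ⟨i, ⟨hi, rfl⟩, huniq⟩ := hvert e he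
  have hmin_theta : ∀ y ∈ thetaCols M, g (normCol M i) ≤ g y := fun y hy =>
    hmin (subset_convexHull ℝ _ hy)
  have hne : (M * B).col i ≠ M.col i := col_mul_ne_col_of_mem_extremePoints hM he
    (fun k hk hki => huniq k ⟨hk, hki.symm⟩) (fun k => hB.1 k i) (hB.2.1 i)
  have hneg : g (P.col i) < 0 := map_col_mul_one_sub_smul_neg (g := g.toLinearMap) hM hB h0 h1 hi
    hne hmin_theta ((hmin_theta x hx).trans_lt hgx)
  have hnonneg : 0 * ∑ l, P l i ≤ g (P.col i) :=
    mul_sum_le_map_of_mem_columnCone (g := g.toLinearMap) hP hgP (col_mem_columnCone P i)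
  rw [zero_mul] at hnonneg
  exact hneg.not_ge hnonneg

theorem columnCone_mul_one_sub_smul_mono (hM : ∀ i j, 0 ≤ M i j) (hvert : NonRepeatedVertices M)
    (hB : TigrelFeasible M B) {α β : ℝ} (h0 : 0 ≤ α) (hαβ : α ≤ β) (h1 : β ≤ 1) :
    columnCone (M * (1 - α • B)) ≤ columnCone (M * (1 - β • B)) := by
  have hβ : 0 ≤ β := h0.trans hαβ
  obtain ⟨t, ht0, ht1, rfl⟩ : ∃ t, 0 ≤ t ∧ t ≤ 1 ∧ α = t * β :=
    ⟨α / β, div_nonneg h0 hβ, div_le_one_of_le₀ hαβ hβ,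
      (div_mul_cancel_of_imp fun h => le_antisymm (h ▸ hαβ) h0).symm⟩
  have hcomb : M * (1 - (t * β) • B) = (1 - t) • M + t • (M * (1 - β • B)) := by
    rw [mul_one_sub_smul, mul_one_sub_smul]
    module
  rw [hcomb]
  refine columnCone_le_iff.2 fun j => Submodule.add_mem _
    (PointedCone.smul_mem _ (sub_nonneg.2 ht1) ?_)
    (PointedCone.smul_mem _ ht0 (col_mem_columnCone _ j))
  exact columnCone_le_columnCone_mul_one_sub_smul hM hvert hB hβ h1 (col_mem_columnCone M j)

end Tigrel

theorem stmt17_general {m n : ℕ} (M : Matrix (Fin m) (Fin n) ℝ) (hM : ∀ i j, 0 ≤ M i j)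
    (hvert : NonRepeatedVertices M)
    (α β : ℝ) (h0 : 0 ≤ α) (hαβ : α ≤ β) (h1 : β ≤ 1)
    (B : Matrix (Fin n) (Fin n) ℝ) (hB : TigrelFeasible M B) :
    convexHull ℝ (thetaCols M) ⊆ convexHull ℝ (thetaCols (M * (1 - α • B))) ∧
    convexHull ℝ (thetaCols (M * (1 - α • B))) ⊆
      convexHull ℝ (thetaCols (M * (1 - β • B))) ∧
    convexHull ℝ (thetaCols (M * (1 - β • B))) ⊆
      stdSimplex ℝ (Fin m) ∩ (Submodule.span ℝ (thetaCols M) : Set (Fin m → ℝ)) ∧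
    nnRank M ≤ nnRank (M * (1 - α • B)) ∧
    nnRank (M * (1 - α • B)) ≤ nnRank (M * (1 - β • B)) := by
  have hα1 : α ≤ 1 := hαβ.trans h1
  have hPα := mul_one_sub_smul_nonneg hM hB hα1
  have hPβ := mul_one_sub_smul_nonneg hM hB h1
  have hcone_α := columnCone_le_columnCone_mul_one_sub_smul hM hvert hB h0 hα1
  have hcone_αβ := columnCone_mul_one_sub_smul_mono hM hvert hB h0 hαβ h1
  refine ⟨convexHull_thetaCols_mono hM hPα hcone_α, convexHull_thetaCols_mono hPα hPβ hcone_αβ,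
    Set.subset_inter ?_ ?_, nnRank_le_nnRank_of_columnCone_le hPα hcone_α,
    nnRank_le_nnRank_of_columnCone_le hPβ hcone_αβ⟩
  · exact convexHull_min (thetaCols_subset_stdSimplex hPβ) (convex_stdSimplex ℝ _)
  · exact convexHull_min (Submodule.subset_span.trans (span_thetaCols_mul_le M _))
      (Submodule.convex _)

/-- for `0 ≤ α ≤ β ≤ 1`,
`conv(θ(M)) ⊆ conv(θ(P^α(M))) ⊆ conv(θ(P^β(M))) ⊆ Δ^m ∩ col(θ(M))`, hence
`rank₊(M) ≤ rank₊(P^α(M)) ≤ rank₊(P^β(M))`. -/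
theorem stmt17 {m n : ℕ} (M : Matrix (Fin m) (Fin n) ℝ) (hM : ∀ i j, 0 ≤ M i j)
    (hvert : NonRepeatedVertices M)
    (α β : ℝ) (h0 : 0 ≤ α) (hαβ : α ≤ β) (h1 : β ≤ 1)
    (B : Matrix (Fin n) (Fin n) ℝ) (hB : TigrelOpt M B) :
    convexHull ℝ (thetaCols M) ⊆ convexHull ℝ (thetaCols (M * (1 - α • B))) ∧
    convexHull ℝ (thetaCols (M * (1 - α • B))) ⊆
      convexHull ℝ (thetaCols (M * (1 - β • B))) ∧
    convexHull ℝ (thetaCols (M * (1 - β • B))) ⊆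
      stdSimplex ℝ (Fin m) ∩ (Submodule.span ℝ (thetaCols M) : Set (Fin m → ℝ)) ∧
    nnRank M ≤ nnRank (M * (1 - α • B)) ∧
    nnRank (M * (1 - α • B)) ≤ nnRank (M * (1 - β • B)) :=
  stmt17_general M hM hvert α β h0 hαβ h1 B hB.1
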